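/- Let X be a totally disconnected compact metrizable space, σ : X → X a surjective local homeomorphism, and {P_n}_{n≥0} a σ-refined sequence of partitions of X. Let j ≥ 1, and let Z ∈ P_{2j−1}, Z'' ∈ P_{2j+1} and Z₁ ∈ P_{2j−2} be such that Z'' ⊆ Z ⊆ σ(Z₁). Then there exists a unique Z' ∈ P_{2j} such that Z' ⊆ Z₁ and Z'' ⊆ σ(Z') ⊆ Z. -/

import Mathlib

open Set

section Prelim

variable {X : Type*}

/-- A (finite clopen) partition of the space `X`: a finite family of nonempty, pairwise
disjoint clopen subsets of `X` whose union is `X`. -/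
def IsClopenPartition [TopologicalSpace X] (P : Set (Set X)) : Prop :=
  P.Finite ∧ (∀ Z ∈ P, Z.Nonempty) ∧ (∀ Z ∈ P, IsClopen Z) ∧
    P.PairwiseDisjoint id ∧ ⋃₀ P = Set.univ

/-- The cardinality of the fiber `σ⁻¹({x})`. -/
noncomputable def fiberCard (σ : X → X) (x : X) : ℕ :=
  (σ ⁻¹' {x}).ncard

/-- `U_{≥ k}`: the set of points with at least `k` preimages. -/
def fiberGE (σ : X → X) (k : ℕ) : Set X :=
  {x : X | k ≤ fiberCard σ x}

/-- `N(σ) = sup_{x ∈ X} |σ⁻¹({x})|`. -/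
noncomputable def Nsigma (σ : X → X) : ℕ :=
  sSup (Set.range (fiberCard σ))

/-- The partition `P^σ`, whose members are the nonempty sets of the form
`σ(Z₁) ∩ ⋯ ∩ σ(Z_k) \ U_{≥ k+1}` for pairwise distinct `Z₁, …, Z_k ∈ P` and
`1 ≤ k ≤ N(σ)`. -/
noncomputable def sigmaPart (σ : X → X) (P : Set (Set X)) : Set (Set X) :=
  {T | ∃ k : ℕ, 1 ≤ k ∧ k ≤ Nsigma σ ∧ ∃ Z : Fin k → Set X,
      (∀ j, Z j ∈ P) ∧ Function.Injective Z ∧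
      T = (⋂ j, σ '' Z j) \ fiberGE σ (k + 1) ∧ T.Nonempty}

/-- The partition `σ⁻¹(P) = {σ⁻¹(Z) : Z ∈ P}`. -/
def preimagePart (σ : X → X) (P : Set (Set X)) : Set (Set X) :=
  (fun Z => σ ⁻¹' Z) '' P

/-- `P₁ ≼ P₂`: `P₂` is finer than `P₁`, i.e. every member of `P₂` is contained in a
member of `P₁`. -/
def Finer (P₁ P₂ : Set (Set X)) : Prop :=
  ∀ Z ∈ P₂, ∃ Z' ∈ P₁, Z ⊆ Z'

/-- The wedge `P₁ ∨ P₂ = {Z₁ ∩ Z₂ ≠ ∅ : Z₁ ∈ P₁, Z₂ ∈ P₂}`. -/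
def wedgePart (P₁ P₂ : Set (Set X)) : Set (Set X) :=
  {T | ∃ Z₁ ∈ P₁, ∃ Z₂ ∈ P₂, T = Z₁ ∩ Z₂ ∧ T.Nonempty}

/-- A σ-refined sequence of partitions, with respect to a fixed distance function `d`
inducing the topology:  (a) `σ` is injective on each member of `P 0`; (b) each `P (n+1)`
refines `P n`; (c) `⋃ n, P n` generates the topology of `X`; (d) the diameters of the
members of `P n` tend to `0`; (e) `P (2j) ∨ P (2j)^σ ≼ P (2j+1)` and
`P (2j+1) ∨ σ⁻¹(P (2j+1)) ≼ P (2j+2)`. -/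
noncomputable def IsSigmaRefinedSeq [t : TopologicalSpace X] (d : X → X → ℝ) (σ : X → X)
    (P : ℕ → Set (Set X)) : Prop :=
  (∀ n, IsClopenPartition (P n)) ∧
  (∀ Z ∈ P 0, Set.InjOn σ Z) ∧
  (∀ n, Finer (P n) (P (n + 1))) ∧
  t = TopologicalSpace.generateFrom (⋃ n, P n) ∧
  (∀ ε : ℝ, 0 < ε → ∃ N : ℕ, ∀ n, N ≤ n → ∀ Z ∈ P n, ∀ x ∈ Z, ∀ y ∈ Z, d x y < ε) ∧
  (∀ j : ℕ, Finer (wedgePart (P (2 * j)) (sigmaPart σ (P (2 * j)))) (P (2 * j + 1))) ∧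
  (∀ j : ℕ, Finer (wedgePart (P (2 * j + 1)) (preimagePart σ (P (2 * j + 1))))
      (P (2 * j + 2)))

end Prelim

/-!
Pick `y ∈ Z''` and its preimage `x ∈ Z₁`. The only candidate for `Z'` is the member of `P (2j)`
containing `x`, since `σ` is injective on `Z₁`. It lies in `Z₁` because `P (2j)` refines
`P (2j - 2)`, and its image lies in `Z` because `P (2j)` refines `σ⁻¹(P (2j - 1))`. For
`Z'' ⊆ σ(Z')`, note that a member `σ(W₁) ∩ ⋯ ∩ σ(W_k) \ U_{≥ k+1}` of `P (2j)^σ` consists of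
points with exactly one preimage in each `W_i` and no other preimages. Hence if it contains `σ(x)`,
then `Z'` is one of the `W_i`, and so the whole member is contained in `σ(Z')`.
-/

section Finer

variable {X : Type*} {P Q R : Set (Set X)}

theorem Finer.refl (P : Set (Set X)) : Finer P P :=
  fun Z hZ => ⟨Z, hZ, Subset.rfl⟩

theorem Finer.trans (hPQ : Finer P Q) (hQR : Finer Q R) : Finer P R := by
  intro C hC
  obtain ⟨B, hB, hCB⟩ := hQR C hC
  obtain ⟨A, hA, hBA⟩ := hPQ B hB
  exact ⟨A, hA, hCB.trans hBA⟩

theorem finer_of_le_of_finer_succ {P : ℕ → Set (Set X)}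
    (h : ∀ n, Finer (P n) (P (n + 1))) {m n : ℕ} (hmn : m ≤ n) : Finer (P m) (P n) :=
  Nat.le_induction (Finer.refl _) (fun n _ ih => ih.trans (h n)) n hmn

theorem finer_wedgePart_left (P Q : Set (Set X)) : Finer P (wedgePart P Q) := by
  rintro _ ⟨A, hA, B, -, rfl, -⟩
  exact ⟨A, hA, inter_subset_left⟩

theorem finer_wedgePart_right (P Q : Set (Set X)) : Finer Q (wedgePart P Q) := by
  rintro _ ⟨A, -, B, hB, rfl, -⟩
  exact ⟨B, hB, inter_subset_right⟩

theorem Finer.subset_of_mem (hPQ : Finer P Q) (hP : P.PairwiseDisjoint id) {A B : Set X}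
    (hA : A ∈ P) (hB : B ∈ Q) {x : X} (hxA : x ∈ A) (hxB : x ∈ B) : B ⊆ A := by
  obtain ⟨C, hC, hBC⟩ := hPQ B hB
  rwa [hP.elim_set hA hC x hxA (hBC hxB)]

theorem Finer.injOn {Y : Type*} {f : X → Y} (hPQ : Finer P Q) (hf : ∀ A ∈ P, InjOn f A) :
    ∀ B ∈ Q, InjOn f B := by
  intro B hB
  obtain ⟨A, hA, hBA⟩ := hPQ B hB
  exact (hf A hA).mono hBA

end Finer

section Fibers

variable {X : Type*} {σ : X → X} {P : Set (Set X)}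

theorem finite_preimage_singleton_of_injOn {Y : Type*} {f : X → Y} (hfin : P.Finite)
    (hcover : ⋃₀ P = univ) (hf : ∀ A ∈ P, InjOn f A) (y : Y) : (f ⁻¹' {y}).Finite := by
  have hfiber : f ⁻¹' {y} = ⋃ A ∈ P, A ∩ f ⁻¹' {y} := by
    rw [← iUnion₂_inter, ← sUnion_eq_biUnion, hcover, univ_inter]
  rw [hfiber]
  refine hfin.biUnion fun A hA => Subsingleton.finite ?_
  rintro a ⟨haA, ha⟩ b ⟨hbA, hb⟩
  exact hf A hA haA hbA (ha.trans hb.symm)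

theorem exists_mem_of_fiberCard_le {ι : Type*} {W : ι → Set X}
    (hW : Pairwise (Function.onFun Disjoint W)) {x : X} (hfiber : (σ ⁻¹' {σ x}).Finite)
    (hcard : fiberCard σ (σ x) ≤ Nat.card ι) (hx : ∀ i, σ x ∈ σ '' W i) : ∃ i, x ∈ W i := by
  choose z hzW hzx using hx
  have hz : Function.Injective z := fun i k hik =>
    hW.eq (not_disjoint_iff.2 ⟨z i, hzW i, hik ▸ hzW k⟩)
  have hrange : range z = σ ⁻¹' {σ x} := by
    refine eq_of_subset_of_ncard_le (range_subset_iff.2 hzx) ?_ hfiber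
    rwa [ncard_range_of_injective hz]
  obtain ⟨i, hi⟩ : x ∈ range z := hrange ▸ mem_singleton (σ x)
  exact ⟨i, hi ▸ hzW i⟩

theorem subset_image_of_mem_sigmaPart (hP : P.PairwiseDisjoint id) {A T : Set X} (hA : A ∈ P)
    (hT : T ∈ sigmaPart σ P) {x : X} (hfiber : (σ ⁻¹' {σ x}).Finite) (hxA : x ∈ A)
    (hxT : σ x ∈ T) : T ⊆ σ '' A := by
  obtain ⟨k, -, -, W, hWP, hWinj, rfl, -⟩ := hT
  obtain ⟨i, hxW⟩ : ∃ i, x ∈ W i := by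
    refine exists_mem_of_fiberCard_le (fun i l hil => hP (hWP i) (hWP l) (hWinj.ne hil)) hfiber
      ?_ (mem_iInter.1 hxT.1)
    rw [Nat.card_fin]
    exact Nat.le_of_not_lt hxT.2
  rw [hP.elim_set hA (hWP i) x hxA hxW]
  exact sdiff_subset.trans (iInter_subset _ i)

theorem pairwiseDisjoint_preimagePart (σ : X → X) (hP : P.PairwiseDisjoint id) :
    (preimagePart σ P).PairwiseDisjoint id := by
  rintro _ ⟨A, hA, rfl⟩ _ ⟨B, hB, rfl⟩ hAB
  exact (hP hA hB fun h => hAB (h ▸ rfl)).preimage σ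

end Fibers

theorem existsUnique_image_between {X : Type*} {σ : X → X} {P Q R S : Set (Set X)}
    (hfiber : ∀ y, (σ ⁻¹' {y}).Finite) (hP : P.PairwiseDisjoint id) (hQ : Q.PairwiseDisjoint id)
    (hR : R.PairwiseDisjoint id) (hRcover : ⋃₀ R = univ) (hPQ : Finer P Q)
    (hQR : Finer (wedgePart Q (preimagePart σ Q)) R) (hRS : Finer (sigmaPart σ R) S)
    {Z Z'' Z₁ : Set X} (hZ : Z ∈ Q) (hZ'' : Z'' ∈ S) (hne : Z''.Nonempty) (hZ₁ : Z₁ ∈ P)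
    (hinj : InjOn σ Z₁) (hZ''Z : Z'' ⊆ Z) (hZZ₁ : Z ⊆ σ '' Z₁) :
    ∃! Z' : Set X, Z' ∈ R ∧ Z' ⊆ Z₁ ∧ Z'' ⊆ σ '' Z' ∧ σ '' Z' ⊆ Z := by
  obtain ⟨y, hy⟩ := hne
  obtain ⟨x, hxZ₁, rfl⟩ := hZZ₁ (hZ''Z hy)
  obtain ⟨Z', hZ', hxZ'⟩ : x ∈ ⋃₀ R := hRcover ▸ mem_univ x
  have hPR : Finer P R := hPQ.trans ((finer_wedgePart_left _ _).trans hQR)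
  have hQR' : Finer (preimagePart σ Q) R := (finer_wedgePart_right _ _).trans hQR
  refine ⟨Z', ⟨hZ', hPR.subset_of_mem hP hZ₁ hZ' hxZ₁ hxZ', ?_, ?_⟩, ?_⟩
  · obtain ⟨T, hT, hZ''T⟩ := hRS Z'' hZ''
    exact hZ''T.trans (subset_image_of_mem_sigmaPart hR hZ' hT (hfiber _) hxZ' (hZ''T hy))
  · exact image_subset_iff.2 (hQR'.subset_of_mem (pairwiseDisjoint_preimagePart σ hQ)
      (mem_image_of_mem _ hZ) hZ' (hZ''Z hy) hxZ')
  · rintro V ⟨hV, hVZ₁, hZ''V, -⟩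
    obtain ⟨x', hx'V, hx'⟩ := hZ''V hy
    obtain rfl : x' = x := hinj (hVZ₁ hx'V) hxZ₁ hx'
    exact hR.elim_set hV hZ' x' hx'V hxZ'

section SigmaRefined

variable {X : Type*} [TopologicalSpace X] {d : X → X → ℝ} {σ : X → X} {P : ℕ → Set (Set X)}

theorem IsSigmaRefinedSeq.injOn (hP : IsSigmaRefinedSeq d σ P) (n : ℕ) :
    ∀ A ∈ P n, InjOn σ A :=
  (finer_of_le_of_finer_succ hP.2.2.1 n.zero_le).injOn hP.2.1

theorem IsSigmaRefinedSeq.finite_preimage_singleton (hP : IsSigmaRefinedSeq d σ P) (y : X) :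
    (σ ⁻¹' {y}).Finite := by
  obtain ⟨hfin, -, -, -, hcover⟩ := hP.1 0
  exact finite_preimage_singleton_of_injOn hfin hcover (hP.injOn 0) y

theorem stmt13_general (hP : IsSigmaRefinedSeq d σ P) {j : ℕ} (hj : 1 ≤ j) {Z Z'' Z₁ : Set X}
    (hZ : Z ∈ P (2 * j - 1)) (hZ'' : Z'' ∈ P (2 * j + 1)) (hZ₁ : Z₁ ∈ P (2 * j - 2))
    (h1 : Z'' ⊆ Z) (h2 : Z ⊆ σ '' Z₁) :
    ∃! Z' : Set X, Z' ∈ P (2 * j) ∧ Z' ⊆ Z₁ ∧ Z'' ⊆ σ '' Z' ∧ σ '' Z' ⊆ Z := by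
  obtain ⟨i, rfl⟩ := Nat.exists_eq_add_of_le' hj
  have hfiber := hP.finite_preimage_singleton
  have hinj := hP.injOn _ Z₁ hZ₁
  obtain ⟨hpart, -, hmono, -, -, hsigma, hpreimage⟩ := hP
  have hdisj (n : ℕ) : (P n).PairwiseDisjoint id := (hpart n).2.2.2.1
  obtain ⟨-, -, -, -, hcover⟩ := hpart (2 * (i + 1))
  have hsigma' : Finer (sigmaPart σ (P (2 * (i + 1)))) (P (2 * (i + 1) + 1)) :=
    (finer_wedgePart_right _ _).trans (hsigma (i + 1))
  exact existsUnique_image_between hfiber (hdisj _) (hdisj _) (hdisj _) hcover (hmono (2 * i))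
    (hpreimage i) hsigma' hZ hZ'' ((hpart _).2.1 Z'' hZ'') hZ₁ hinj h1 h2

end SigmaRefined

/-- Lemma (group of `f`'s), part (ii): if `j ≥ 1`, `Z ∈ P (2j−1)`, `Z'' ∈ P (2j+1)` and
`Z₁ ∈ P (2j−2)` satisfy `Z'' ⊆ Z ⊆ σ(Z₁)`, then there is a unique `Z' ∈ P (2j)` with
`Z' ⊆ Z₁` and `Z'' ⊆ σ(Z') ⊆ Z`. -/
theorem stmt13 {X : Type*} [MetricSpace X] [CompactSpace X] [TotallyDisconnectedSpace X]
    (σ : X → X) (hσ : IsLocalHomeomorph σ) (hsurj : Function.Surjective σ)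
    (P : ℕ → Set (Set X)) (hP : IsSigmaRefinedSeq dist σ P)
    (j : ℕ) (hj : 1 ≤ j) (Z Z'' Z₁ : Set X)
    (hZ : Z ∈ P (2 * j - 1)) (hZ'' : Z'' ∈ P (2 * j + 1)) (hZ₁ : Z₁ ∈ P (2 * j - 2))
    (h1 : Z'' ⊆ Z) (h2 : Z ⊆ σ '' Z₁) :
    ∃! Z' : Set X, Z' ∈ P (2 * j) ∧ Z' ⊆ Z₁ ∧ Z'' ⊆ σ '' Z' ∧ σ '' Z' ⊆ Z :=
  stmt13_general hP hj hZ hZ'' hZ₁ h1 h2
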